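/- arXiv:2203.15791 — 2 statements merged into one kernel-verified Lean document; each statement's English description precedes it below -/
import Mathlib

section
/- Let L ≥ 2. For any sites u < v and u' < v' in {1,…,L}, the operators exp(iπ Sᶻ_u Sˣ_v) and exp(iπ Sᶻ_{u'} Sˣ_{v'}) on (ℂ³)^{⊗L} commute; in particular the product defining the Kennedy–Tasaki transformation U_KT = ∏_{1≤u<v≤L} exp(iπ Sᶻ_u Sˣ_v) is independent of the ordering of its factors. -/
noncomputable section
open Complex Matrix

/-- The Hilbert space operators of the `L`-site spin-1 chain: matrices on `(ℂ³)^{⊗L}`,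
with the tensor factors indexed by sites and the single-site ordered basis `(|+⟩,|0⟩,|−⟩)`. -/
abbrev Op (L : ℕ) : Type := Matrix (Fin L → Fin 3) (Fin L → Fin 3) ℂ

/-- The spin-1 matrix `Sˣ`. -/
def Sx : Matrix (Fin 3) (Fin 3) ℂ :=
  ((Real.sqrt 2 : ℝ) : ℂ)⁻¹ • !![0, 1, 0; 1, 0, 1; 0, 1, 0]

/-- The spin-1 matrix `Sʸ`. -/
def Sy : Matrix (Fin 3) (Fin 3) ℂ :=
  ((Real.sqrt 2 : ℝ) : ℂ)⁻¹ • !![0, -I, 0; I, 0, -I; 0, I, 0]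

/-- The spin-1 matrix `Sᶻ = diag(1,0,−1)`. -/
def Sz : Matrix (Fin 3) (Fin 3) ℂ := !![1, 0, 0; 0, 0, 0; 0, 0, -1]

/-- `site A j` is the one-site operator `A` acting on site `j` and identity elsewhere. -/
def site {L : ℕ} (A : Matrix (Fin 3) (Fin 3) ℂ) (j : Fin L) : Op L :=
  Matrix.of fun f g => ∏ k : Fin L, if k = j then A (f k) (g k) else (if f k = g k then 1 else 0)

/-- One factor `exp(iπ Sᶻ_u Sˣ_v)` of the Kennedy–Tasaki transformation. -/
def ktFactor {L : ℕ} (u v : Fin L) : Op L :=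
  NormedSpace.exp (((Real.pi : ℂ) * I) • (site Sz u * site Sx v))

/-- The Kennedy–Tasaki transformation `U_KT = ∏_{1 ≤ u < v ≤ L} exp(iπ Sᶻ_u Sˣ_v)`
(the factors pairwise commute, so the ordering is immaterial). -/
def UKT (L : ℕ) : Op L :=
  ((List.finRange L).map fun u =>
    ((List.finRange L).map fun v => if u < v then ktFactor u v else 1).prod).prod

/-- The p-wave basis vector `|↑⟩ = (|+⟩ − |−⟩)/√2`. -/
def up : Fin 3 → ℂ := ![((Real.sqrt 2 : ℝ) : ℂ)⁻¹, 0, -((Real.sqrt 2 : ℝ) : ℂ)⁻¹]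

/-- The p-wave basis vector `|↓⟩ = |0⟩`. -/
def down : Fin 3 → ℂ := ![0, 1, 0]

/-- The p-wave basis vector `|h⟩ = (|+⟩ + |−⟩)/√2`. -/
def hole : Fin 3 → ℂ := ![((Real.sqrt 2 : ℝ) : ℂ)⁻¹, 0, ((Real.sqrt 2 : ℝ) : ℂ)⁻¹]

/-- The rank-one operator `|a⟩⟨b|`. -/
def ketbra (a b : Fin 3 → ℂ) : Matrix (Fin 3) (Fin 3) ℂ := Matrix.vecMulVec a (star b)

/-- `σˣ = |↑⟩⟨↓| + |↓⟩⟨↑|` (annihilating `|h⟩`). -/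
def sigx : Matrix (Fin 3) (Fin 3) ℂ := ketbra up down + ketbra down up

/-- `σʸ = −i|↑⟩⟨↓| + i|↓⟩⟨↑|` (annihilating `|h⟩`). -/
def sigy : Matrix (Fin 3) (Fin 3) ℂ := (-I) • ketbra up down + I • ketbra down up

/-- `σᶻ = |↑⟩⟨↑| − |↓⟩⟨↓|` (annihilating `|h⟩`). -/
def sigz : Matrix (Fin 3) (Fin 3) ℂ := ketbra up up - ketbra down down

/-- `n = |↑⟩⟨↑| + |↓⟩⟨↓|` (annihilating `|h⟩`). -/
def nMat : Matrix (Fin 3) (Fin 3) ℂ := ketbra up up + ketbra down down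

/-- `h = |h⟩⟨h|`. -/
def hMat : Matrix (Fin 3) (Fin 3) ℂ := ketbra hole hole

/-- `P = ⊗_{j=1}^L n_j`, the orthogonal projection onto the hole-free subspace. -/
def Pproj (L : ℕ) : Op L := Matrix.of fun f g => ∏ k : Fin L, nMat (f k) (g k)

/-- The Heisenberg coupling `S_j · S_k`. -/
def heis {L : ℕ} (j k : Fin L) : Op L :=
  site Sx j * site Sx k + site Sy j * site Sy k + site Sz j * site Sz k

/-- The bilinear-biquadratic Hamiltonian
`H_BLBQ(θ) = Σ_{j=1}^{L−1} [cosθ (S_j·S_{j+1}) + sinθ (S_j·S_{j+1})²]`. -/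
def HBLBQ (L : ℕ) (θ : ℝ) : Op L :=
  ∑ j : Fin L, if h : (j : ℕ) + 1 < L then
    ((Real.cos θ : ℝ) : ℂ) • heis j ⟨(j : ℕ) + 1, h⟩
      + ((Real.sin θ : ℝ) : ℂ) • (heis j ⟨(j : ℕ) + 1, h⟩) ^ 2
  else 0

/-- The self-dual Hamiltonian `H_SD(θ) = H_BLBQ(θ) + U_KT H_BLBQ(θ) U_KT`. -/
def HSD (L : ℕ) (θ : ℝ) : Op L := HBLBQ L θ + UKT L * HBLBQ L θ * UKT L

/-- The spin-1/2 XXZ Hamiltonian written in the p-wave basis: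
`H_XXZ(θ) = (cosθ−sinθ) Σ_j (−σˣ_jσˣ_{j+1} + σʸ_jσʸ_{j+1}) + sinθ Σ_j σᶻ_jσᶻ_{j+1}`. -/
def HXXZ (L : ℕ) (θ : ℝ) : Op L :=
  ((Real.cos θ - Real.sin θ : ℝ) : ℂ) •
    (∑ j : Fin L, if h : (j : ℕ) + 1 < L then
      -(site sigx j * site sigx ⟨(j : ℕ) + 1, h⟩) + site sigy j * site sigy ⟨(j : ℕ) + 1, h⟩
    else 0)
  + ((Real.sin θ : ℝ) : ℂ) •
    (∑ j : Fin L, if h : (j : ℕ) + 1 < L then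
      site sigz j * site sigz ⟨(j : ℕ) + 1, h⟩
    else 0)

/-- The global product `∏_{j=1}^L exp(c • A_j)` of commuting single-site exponentials. -/
def globalProd (L : ℕ) (A : Matrix (Fin 3) (Fin 3) ℂ) (c : ℂ) : Op L :=
  ((List.finRange L).map fun j => NormedSpace.exp (c • site A j)).prod

/-- The symmetry flux `F^y_j = exp(−iπ Σ_{k<j} Sʸ_k) · Sʸ_j`. -/
def fluxY (L : ℕ) (j : Fin L) : Op L :=
  NormedSpace.exp ((-((Real.pi : ℂ) * I)) •
    ∑ k : Fin L, if (k : ℕ) < (j : ℕ) then site Sy k else 0) * site Sy j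


/-!
The generator `Sᶻ_u Sˣ_v` satisfies `A³ = A`, so its spectrum lies in `{-1, 0, 1}` and
`exp(iπA) = 1 - 2A²`. Thus each factor only involves the squares `(Sᶻ)²` and `(Sˣ)²`, which
commute with each other although `Sᶻ` and `Sˣ` do not.
-/

section Tensor

variable {ι R : Type*} {n : ι → Type*} [Fintype ι] [DecidableEq ι] [CommSemiring R]
  [∀ i, Fintype (n i)] [∀ i, DecidableEq (n i)]

/-- The Kronecker product `⨂ᵢ Mᵢ` of a finite family of square matrices, as a monoid homomorphism.
Rows and columns are indexed by configurations, i.e. choices of one index of each factor. -/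
def piKroneckerHom : (∀ i, Matrix (n i) (n i) R) →* Matrix (∀ i, n i) (∀ i, n i) R where
  toFun M := Matrix.of fun f g => ∏ i, M i (f i) (g i)
  map_one' := by
    ext f g
    simp [Matrix.one_apply, Finset.prod_ite_zero, funext_iff]
  map_mul' M N := by
    ext f g
    simp only [Pi.mul_apply, Matrix.mul_apply, Matrix.of_apply, ← Finset.prod_mul_distrib,
      Finset.prod_univ_sum, Fintype.piFinset_univ]

lemma piKroneckerHom_apply (M : ∀ i, Matrix (n i) (n i) R) (f g : ∀ i, n i) :
    piKroneckerHom M f g = ∏ i, M i (f i) (g i) :=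
  rfl

end Tensor

section Tripotent

variable {R : Type*} [Ring R] {a : R}

lemma sq_add_self_mul_sq_sub_self_of_pow_three_eq_self (ha : a ^ 3 = a) :
    (a ^ 2 + a) * (a ^ 2 - a) = 0 :=
  calc (a ^ 2 + a) * (a ^ 2 - a) = a * (a ^ 3 - a) := by noncomm_ring
    _ = 0 := by rw [ha, sub_self, mul_zero]

lemma sq_add_self_mul_self_of_pow_three_eq_self (ha : a ^ 3 = a) :
    (a ^ 2 + a) * (a ^ 2 + a) = 2 • (a ^ 2 + a) :=
  calc (a ^ 2 + a) * (a ^ 2 + a) = a * a ^ 3 + 2 • a ^ 3 + a ^ 2 := by noncomm_ring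
    _ = 2 • (a ^ 2 + a) := by rw [ha]; noncomm_ring

lemma isIdempotentElem_half_smul_sq_add_self {𝕂 : Type*} [Field 𝕂] [NeZero (2 : 𝕂)]
    [Algebra 𝕂 R] (ha : a ^ 3 = a) : IsIdempotentElem ((2⁻¹ : 𝕂) • (a ^ 2 + a)) := by
  rw [IsIdempotentElem, smul_mul_smul_comm, sq_add_self_mul_self_of_pow_three_eq_self ha,
    ← Nat.cast_smul_eq_nsmul 𝕂, smul_smul, Nat.cast_ofNat, inv_mul_cancel_right₀ two_ne_zero]

end Tripotent

section Exponential

lemma exp_smul_of_isIdempotentElem {𝕂 𝔸 : Type*} [RCLike 𝕂] [NormedRing 𝔸] [NormedAlgebra 𝕂 𝔸]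
    [CompleteSpace 𝔸] {e : 𝔸} (he : IsIdempotentElem e) (c : 𝕂) :
    NormedSpace.exp (c • e) = 1 + (NormedSpace.exp c - 1) • e := by
  have term_eq (k : ℕ) : (k.factorial⁻¹ : 𝕂) • (c • e) ^ k =
      ((k.factorial⁻¹ : 𝕂) • c ^ k) • e + if k = 0 then 1 - e else 0 := by
    cases k with
    | zero => simp
    | succ k => simp [smul_pow, he.pow_succ_eq, smul_smul]
  have hasSum_terms := ((NormedSpace.exp_series_hasSum_exp' (𝕂 := 𝕂) c).smul_const e).add
    (hasSum_ite_eq 0 (1 - e))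
  calc NormedSpace.exp (c • e)
      = NormedSpace.exp c • e + (1 - e) :=
        (NormedSpace.exp_series_hasSum_exp' (𝕂 := 𝕂) (c • e)).unique
          (by simpa only [term_eq] using hasSum_terms)
    _ = 1 + (NormedSpace.exp c - 1) • e := by module

variable {𝔸 : Type*} [NormedRing 𝔸] [NormedAlgebra ℂ 𝔸] [CompleteSpace 𝔸] {a : 𝔸}

lemma exp_smul_of_pow_three_eq_self (ha : a ^ 3 = a) (c : ℂ) :
    NormedSpace.exp (c • a) = 1 + sinh c • a + (cosh c - 1) • a ^ 2 := by
  -- `p` and `q` are the spectral projections of `a` for the eigenvalues `1` and `-1`.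
  set p : 𝔸 := (2⁻¹ : ℂ) • (a ^ 2 + a) with hp
  set q : 𝔸 := (2⁻¹ : ℂ) • (a ^ 2 - a) with hq
  have p_idem : IsIdempotentElem p := isIdempotentElem_half_smul_sq_add_self ha
  have q_idem : IsIdempotentElem q := by
    have neg_pow_three : (-a) ^ 3 = -a := by rw [Odd.neg_pow (by decide), ha]
    rw [hq, sub_eq_add_neg, ← neg_sq a]
    exact isIdempotentElem_half_smul_sq_add_self neg_pow_three
  have p_mul_q : p * q = 0 := by
    rw [hp, hq, smul_mul_smul_comm, sq_add_self_mul_sq_sub_self_of_pow_three_eq_self ha, smul_zero]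
  have commute_pq : Commute p q := by
    have commute_sq : Commute (a ^ 2) a := (Commute.refl a).pow_left 2
    exact (((Commute.refl _).sub_right commute_sq).add_left
      (commute_sq.symm.sub_right (.refl a))).smul_left _ |>.smul_right _
  let : NormedAlgebra ℚ 𝔸 := NormedAlgebra.restrictScalars ℚ ℂ 𝔸
  calc NormedSpace.exp (c • a)
      = NormedSpace.exp (c • p + -c • q) := by congr 1; rw [hp, hq]; module
    _ = (1 + (exp c - 1) • p) * (1 + (exp (-c) - 1) • q) := by
      rw [NormedSpace.exp_add_of_commute ((commute_pq.smul_left c).smul_right (-c)),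
        exp_smul_of_isIdempotentElem p_idem, exp_smul_of_isIdempotentElem q_idem, exp_eq_exp_ℂ]
    _ = 1 + (exp c - 1) • p + (exp (-c) - 1) • q := by
      rw [mul_add, mul_one, add_mul, one_mul, smul_mul_smul_comm, p_mul_q, smul_zero, add_zero]
    _ = 1 + sinh c • a + (cosh c - 1) • a ^ 2 := by
      rw [hp, hq, sinh, cosh]; module

lemma exp_pi_mul_I_smul_of_pow_three_eq_self (ha : a ^ 3 = a) :
    NormedSpace.exp ((Real.pi * I : ℂ) • a) = 1 - (2 : ℂ) • a ^ 2 := by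
  rw [exp_smul_of_pow_three_eq_self ha, sinh_mul_I, cosh_mul_I, sin_pi, cos_pi]
  module

end Exponential

section Site

variable {L : ℕ} {A B : Matrix (Fin 3) (Fin 3) ℂ} {u v : Fin L}

lemma site_eq_piKroneckerHom_mulSingle (A : Matrix (Fin 3) (Fin 3) ℂ) (j : Fin L) :
    site A j = piKroneckerHom (Pi.mulSingle j A) := by
  ext f g
  rw [site, Matrix.of_apply, piKroneckerHom_apply]
  refine Finset.prod_congr rfl fun k _ => ?_
  obtain rfl | hk := eq_or_ne k j
  · simp
  · simp [hk, Matrix.one_apply]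

lemma site_pow (A : Matrix (Fin 3) (Fin 3) ℂ) (j : Fin L) (k : ℕ) :
    site (A ^ k) j = site A j ^ k := by
  simp only [site_eq_piKroneckerHom_mulSingle, Pi.mulSingle_pow, map_pow]

lemma commute_site_of_ne (A B : Matrix (Fin 3) (Fin 3) ℂ) (huv : u ≠ v) :
    Commute (site A u) (site B v) := by
  rw [site_eq_piKroneckerHom_mulSingle, site_eq_piKroneckerHom_mulSingle]
  exact (Pi.mulSingle_commute (f := fun _ => Matrix (Fin 3) (Fin 3) ℂ) huv A B).map piKroneckerHom

lemma commute_site_of_commute (hAB : Commute A B) (u v : Fin L) :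
    Commute (site A u) (site B v) := by
  obtain rfl | huv := eq_or_ne u v
  · rw [site_eq_piKroneckerHom_mulSingle, site_eq_piKroneckerHom_mulSingle]
    exact (hAB.map (MonoidHom.mulSingle (fun _ => Matrix (Fin 3) (Fin 3) ℂ) u)).map piKroneckerHom
  · exact commute_site_of_ne A B huv

lemma site_mul_site_pow (A B : Matrix (Fin 3) (Fin 3) ℂ) (huv : u ≠ v) (k : ℕ) :
    (site A u * site B v) ^ k = site (A ^ k) u * site (B ^ k) v := by
  rw [(commute_site_of_ne A B huv).mul_pow, site_pow, site_pow]

open scoped Matrix.Norms.Operator in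
lemma exp_pi_mul_I_smul_site_mul_site (hA : A ^ 3 = A) (hB : B ^ 3 = B) (huv : u ≠ v) :
    NormedSpace.exp ((Real.pi * I : ℂ) • (site A u * site B v)) =
      1 - (2 : ℂ) • (site (A ^ 2) u * site (B ^ 2) v) := by
  have pow_three : (site A u * site B v) ^ 3 = site A u * site B v := by
    rw [site_mul_site_pow A B huv, hA, hB]
  rw [← site_mul_site_pow A B huv]
  exact exp_pi_mul_I_smul_of_pow_three_eq_self pow_three

end Site

lemma Sx_sq : Sx ^ 2 = !![2⁻¹, 0, 2⁻¹; 0, 1, 0; 2⁻¹, 0, 2⁻¹] := by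
  have sqrt_two_inv_sq : (((Real.sqrt 2 : ℝ) : ℂ)⁻¹) ^ 2 = 2⁻¹ := by
    rw [inv_pow, ← ofReal_pow, Real.sq_sqrt zero_le_two, ofReal_ofNat]
  rw [Sx, smul_pow, sqrt_two_inv_sq, pow_two, Matrix.mul_fin_three]
  norm_num

lemma Sx_pow_three : Sx ^ 3 = Sx := by
  rw [pow_succ, Sx_sq, Sx, mul_smul_comm]
  congr 1
  rw [Matrix.mul_fin_three]
  norm_num

lemma Sz_eq_diagonal : Sz = Matrix.diagonal ![1, 0, -1] := by
  ext i j
  fin_cases i <;> fin_cases j <;> rfl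

lemma Sz_pow_three : Sz ^ 3 = Sz := by
  rw [Sz_eq_diagonal, Matrix.diagonal_pow]
  congr 1
  ext i
  fin_cases i <;> norm_num

lemma commute_Sz_sq_Sx_sq : Commute (Sz ^ 2) (Sx ^ 2) := by
  rw [Sz_eq_diagonal, Matrix.diagonal_pow, Sx_sq, commute_iff_eq]
  ext i j
  fin_cases i <;> fin_cases j <;> simp

section KennedyTasaki

variable {L : ℕ} {u v u' v' : Fin L}

lemma ktFactor_eq_one_sub_two_smul (huv : u ≠ v) :
    ktFactor u v = 1 - (2 : ℂ) • (site (Sz ^ 2) u * site (Sx ^ 2) v) :=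
  exp_pi_mul_I_smul_site_mul_site Sz_pow_three Sx_pow_three huv

lemma commute_site_Sz_sq_mul_site_Sx_sq (u v u' v' : Fin L) :
    Commute (site (Sz ^ 2) u * site (Sx ^ 2) v) (site (Sz ^ 2) u' * site (Sx ^ 2) v') :=
  .mul_left
    (.mul_right (commute_site_of_commute (.refl _) u u')
      (commute_site_of_commute commute_Sz_sq_Sx_sq u v'))
    (.mul_right (commute_site_of_commute commute_Sz_sq_Sx_sq.symm v u')
      (commute_site_of_commute (.refl _) v v'))

lemma commute_ktFactor (huv : u ≠ v) (huv' : u' ≠ v') :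
    Commute (ktFactor u v) (ktFactor u' v') := by
  rw [ktFactor_eq_one_sub_two_smul huv, ktFactor_eq_one_sub_two_smul huv']
  have commute_smul := ((commute_site_Sz_sq_mul_site_Sx_sq u v u' v').smul_left (2 : ℂ)).smul_right
    (2 : ℂ)
  exact .sub_left (.one_left _) (.sub_right (.one_right _) commute_smul)

end KennedyTasaki

theorem ktFactor_commute_and_prod_perm_invariant_general (L : ℕ) :
    (∀ u v u' v' : Fin L, u ≠ v → u' ≠ v' → Commute (ktFactor u v) (ktFactor u' v')) ∧
      (∀ l₁ l₂ : List (Fin L × Fin L), (∀ p ∈ l₁, p.1 ≠ p.2) → l₁.Perm l₂ →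
        (l₁.map fun p => ktFactor p.1 p.2).prod = (l₂.map fun p => ktFactor p.1 p.2).prod) := by
  refine ⟨fun _ _ _ _ => commute_ktFactor, fun l₁ l₂ offDiag perm => (perm.map _).prod_eq' ?_⟩
  rw [List.pairwise_map]
  exact List.pairwise_of_forall_mem_list fun p hp q hq =>
    commute_ktFactor (offDiag p hp) (offDiag q hq)

/-- The factors `exp(iπ Sᶻ_u Sˣ_v)` (for `u < v` and `u' < v'`) pairwise commute;
in particular the product defining the Kennedy–Tasaki transformation is independent of the
ordering of its factors. -/
theorem ktFactor_commute_and_prod_perm_invariant (L : ℕ) (hL : 2 ≤ L) :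
    (∀ u v u' v' : Fin L, u < v → u' < v' → Commute (ktFactor u v) (ktFactor u' v')) ∧
      (∀ l₁ l₂ : List (Fin L × Fin L), (∀ p ∈ l₁, p.1 < p.2) → l₁.Perm l₂ →
        (l₁.map fun p => ktFactor p.1 p.2).prod = (l₂.map fun p => ktFactor p.1 p.2).prod) := by
  obtain ⟨commute, prod_eq⟩ := ktFactor_commute_and_prod_perm_invariant_general L
  exact ⟨fun u v u' v' huv huv' => commute u v u' v' huv.ne huv'.ne,
    fun l₁ l₂ lt perm => prod_eq l₁ l₂ (fun p hp => (lt p hp).ne) perm⟩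

end
end

section
/- Let L ≥ 2 and 1 ≤ j ≤ L−1. The Kennedy–Tasaki dual of the Heisenberg bond, U_KT (Sˣ_jSˣ_{j+1}+Sʸ_jSʸ_{j+1}+Sᶻ_jSᶻ_{j+1}) U_KT, commutes with the global quarter-turn Y_{π/2} = ∏_{k=1}^{L} exp(−i(π/2)Sʸ_k) and with the global π-rotation Z_π = ∏_{k=1}^{L} exp(−iπSᶻ_k); that is, it respects the ℤ₄^y ⋊ ℤ₂^z symmetry. -/
noncomputable section
open Complex Matrix

/-!
Every Kennedy–Tasaki factor `exp(iπ Sᶻ_u Sˣ_v)` is an involution `1 - 2 (Sᶻ_u Sˣ_v)²`, and all of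
them commute. Let `j, k` be neighbours. A third site `w` lies on the same side of both, so its
factors with `j` and `k` come in pairs, `exp(iπ Sᶻ_w (Sˣ_j + Sˣ_k))` or
`exp(iπ (Sᶻ_j + Sᶻ_k) Sˣ_w)`, which commute with the rotation-invariant bond `S_j · S_k`.
Conjugation by `U_KT` therefore reduces to conjugation by the single factor at `(j, k)`, and gives
`-(Sˣ_j Sˣ_k + Sᶻ_j Sᶻ_k + {Sˣ, Sᶻ}_j {Sˣ, Sᶻ}_k)`. This expression is unchanged by
`(Sˣ, Sᶻ) ↦ (Sᶻ, -Sˣ)` and by `(Sˣ, Sᶻ) ↦ (-Sˣ, Sᶻ)`, the actions of `Y_{π/2}` and `Z_π`.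
-/

/-- The rotation `exp(±iπ a)` generated by an element with `a³ = a` (both signs agree), written
as a polynomial in `a`. -/
def halfTurn {A : Type*} [Ring A] (a : A) : A := 1 - 2 * a ^ 2

/-- The rotation `exp(-i(π/2) a)` generated by an element with `a³ = a`, written as a polynomial
in `a`. -/
def quarterTurn {A : Type*} [Ring A] [Algebra ℂ A] (a : A) : A := 1 - I • a - a ^ 2

section Tripotent

open NormedSpace

variable {A : Type*} [Ring A]

theorem isIdempotentElem_sq {a : A} (ha : a ^ 3 = a) : IsIdempotentElem (a ^ 2) := by
  rw [IsIdempotentElem, ← pow_add, pow_succ, ha, ← sq]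

variable [Algebra ℂ A] [TopologicalSpace A] [ContinuousSMul ℂ A]

theorem hasSum_exp_smul_even [ContinuousAdd A] {a : A} (ha : a ^ 3 = a) (c : ℂ) :
    HasSum (fun m : ℕ ↦ ((2 * m).factorial : ℂ)⁻¹ • (c • a) ^ (2 * m))
      (1 + (cosh c - 1) • a ^ 2) := by
  convert ((hasSum_cosh c).smul_const (a ^ 2)).add (hasSum_ite_eq 0 (1 - a ^ 2)) using 1
  · funext m
    cases m with
    | zero => simp
    | succ m =>
      simp only [smul_pow, smul_smul, pow_mul a, (isIdempotentElem_sq ha).pow_succ_eq,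
        div_eq_inv_mul, Nat.succ_ne_zero, if_false, add_zero]
  · module

theorem hasSum_exp_smul_odd {a : A} (ha : a ^ 3 = a) (c : ℂ) :
    HasSum (fun m : ℕ ↦ ((2 * m + 1).factorial : ℂ)⁻¹ • (c • a) ^ (2 * m + 1)) (sinh c • a) := by
  have hodd (m : ℕ) : a ^ (2 * m + 1) = a := by
    cases m with
    | zero => simp
    | succ m => rw [pow_succ, pow_mul, (isIdempotentElem_sq ha).pow_succ_eq, ← pow_succ, ha]
  simpa only [smul_pow, smul_smul, hodd, div_eq_inv_mul] using (hasSum_sinh c).smul_const a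

variable [IsTopologicalRing A] [T2Space A]

theorem exp_smul_of_pow_three_eq {a : A} (ha : a ^ 3 = a) (c : ℂ) :
    exp (c • a) = 1 + sinh c • a + (cosh c - 1) • a ^ 2 := by
  have hsum := HasSum.even_add_odd (f := fun n : ℕ ↦ (n.factorial : ℂ)⁻¹ • (c • a) ^ n)
    (hasSum_exp_smul_even ha c) (hasSum_exp_smul_odd ha c)
  rw [exp_eq_tsum ℂ]
  exact hsum.tsum_eq.trans (by abel)

theorem exp_pi_mul_I_smul_eq_halfTurn {a : A} (ha : a ^ 3 = a) :
    exp (((Real.pi : ℂ) * I) • a) = halfTurn a := by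
  rw [exp_smul_of_pow_three_eq ha, sinh_mul_I, cosh_mul_I, sin_pi, cos_pi, halfTurn, two_mul]
  module

theorem exp_neg_pi_mul_I_smul_eq_halfTurn {a : A} (ha : a ^ 3 = a) :
    exp ((-((Real.pi : ℂ) * I)) • a) = halfTurn a := by
  rw [exp_smul_of_pow_three_eq ha, sinh_neg, cosh_neg, sinh_mul_I, cosh_mul_I, sin_pi, cos_pi,
    halfTurn, two_mul]
  module

theorem exp_neg_pi_div_two_mul_I_smul_eq_quarterTurn {a : A} (ha : a ^ 3 = a) :
    exp ((-(((Real.pi / 2 : ℝ) : ℂ) * I)) • a) = quarterTurn a := by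
  rw [exp_smul_of_pow_three_eq ha, sinh_neg, cosh_neg, sinh_mul_I, cosh_mul_I, ← ofReal_sin,
    ← ofReal_cos, Real.sin_pi_div_two, Real.cos_pi_div_two, quarterTurn]
  simp only [ofReal_one, ofReal_zero]
  module

end Tripotent

section HalfTurn

variable {A : Type*} [Ring A] {a b t : A}

theorem halfTurn_mul_self (ha : a ^ 3 = a) : halfTurn a * halfTurn a = 1 := by
  calc halfTurn a * halfTurn a = 1 - 4 * a ^ 2 + 4 * (a ^ 2 * a ^ 2) := by
        rw [halfTurn]; noncomm_ring
    _ = 1 := by rw [(isIdempotentElem_sq ha).eq]; abel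

theorem halfTurn_mul_eq_neg (ha : a ^ 3 = a) : halfTurn a * a = -a := by
  calc halfTurn a * a = a - 2 * a ^ 3 := by rw [halfTurn]; noncomm_ring
    _ = -a := by rw [ha]; noncomm_ring

theorem mul_halfTurn_eq_neg (ha : a ^ 3 = a) : a * halfTurn a = -a := by
  calc a * halfTurn a = a - 2 * a ^ 3 := by rw [halfTurn]; noncomm_ring
    _ = -a := by rw [ha]; noncomm_ring

theorem halfTurn_commute_of_sq (hat : Commute (a ^ 2) t) : Commute (halfTurn a) t :=
  (Commute.one_left t).sub_left ((Commute.ofNat_left 2 t).mul_left hat)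

theorem halfTurn_commute (hat : Commute a t) : Commute (halfTurn a) t :=
  halfTurn_commute_of_sq (hat.pow_left 2)

theorem semiconjBy_halfTurn_neg (hat : a ^ 2 * t + t * a ^ 2 = t) :
    SemiconjBy (halfTurn a) (-t) t := by
  have hta : t * a ^ 2 = t - a ^ 2 * t := eq_sub_of_add_eq' hat
  calc halfTurn a * -t = t - 2 * (t - a ^ 2 * t) := by rw [halfTurn]; noncomm_ring
    _ = t * halfTurn a := by rw [← hta, halfTurn]; noncomm_ring

theorem halfTurn_mul_conj_left (hab : Commute a b) (ha : a ^ 3 = a) (hb : b ^ 3 = b)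
    (hbt : Commute b t) (hat : a ^ 2 * t + t * a ^ 2 = t) :
    halfTurn (a * b) * t * halfTurn (a * b) = t * halfTurn b := by
  have hcube : (a * b) ^ 3 = a * b := by rw [hab.mul_pow, ha, hb]
  have hpush : halfTurn (a * b) * t = t * (1 - 2 * ((1 - a ^ 2) * b ^ 2)) := by
    calc halfTurn (a * b) * t = t - 2 * (a ^ 2 * (b ^ 2 * t)) := by
          rw [halfTurn, hab.mul_pow]; noncomm_ring
      _ = t - 2 * (a ^ 2 * t * b ^ 2) := by rw [(hbt.pow_left 2).eq, mul_assoc]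
      _ = t - 2 * ((t - t * a ^ 2) * b ^ 2) := by rw [eq_sub_of_add_eq hat]
      _ = t * (1 - 2 * ((1 - a ^ 2) * b ^ 2)) := by noncomm_ring
  have hfactor : halfTurn b * halfTurn (a * b) = 1 - 2 * ((1 - a ^ 2) * b ^ 2) := by
    calc halfTurn b * halfTurn (a * b)
        = 1 - 2 * b ^ 2 - 2 * (a ^ 2 * b ^ 2) + 4 * (b ^ 2 * a ^ 2 * b ^ 2) := by
          rw [halfTurn, halfTurn, hab.mul_pow]; noncomm_ring
      _ = 1 - 2 * b ^ 2 - 2 * (a ^ 2 * b ^ 2) + 4 * (a ^ 2 * b ^ 2) := by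
          rw [← (hab.pow_pow 2 2).eq, mul_assoc (a ^ 2), (isIdempotentElem_sq hb).eq]
      _ = 1 - 2 * ((1 - a ^ 2) * b ^ 2) := by noncomm_ring
  rw [hpush, ← hfactor, mul_assoc, mul_assoc, halfTurn_mul_self hcube, mul_one]

theorem halfTurn_mul_conj_right (hab : Commute a b) (ha : a ^ 3 = a) (hb : b ^ 3 = b)
    (hat : Commute a t) (hbt : b ^ 2 * t + t * b ^ 2 = t) :
    halfTurn (a * b) * t * halfTurn (a * b) = halfTurn a * t := by
  rw [hab.eq, halfTurn_mul_conj_left hab.symm hb ha hat hbt, (halfTurn_commute hat).eq]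

end HalfTurn

/-- The relations of the spin-1 representation: `x, y, z` satisfy the `su(2)` commutation relations
together with the spin-1 identities `xyx = yzy = zxz = 0`, from which `x³ = x` and
`x²y + yx² = y` follow. -/
structure IsSpinOneTriple {A : Type*} [Ring A] [Algebra ℂ A] (x y z : A) : Prop where
  lie_xy : x * y - y * x = I • z
  lie_yz : y * z - z * y = I • x
  lie_zx : z * x - x * z = I • y
  mul_mul_xyx : x * y * x = 0
  mul_mul_yzy : y * z * y = 0
  mul_mul_zxz : z * x * z = 0

namespace IsSpinOneTriple

variable {A : Type*} [Ring A] [Algebra ℂ A] {x y z : A}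

theorem rotate (h : IsSpinOneTriple x y z) : IsSpinOneTriple y z x :=
  ⟨h.lie_yz, h.lie_zx, h.lie_xy, h.mul_mul_yzy, h.mul_mul_zxz, h.mul_mul_xyx⟩

theorem map {B : Type*} [Ring B] [Algebra ℂ B] (h : IsSpinOneTriple x y z) (f : A →ₐ[ℂ] B) :
    IsSpinOneTriple (f x) (f y) (f z) := by
  constructor <;>
    simp only [← map_mul, ← map_sub, ← map_smul, h.lie_xy, h.lie_yz, h.lie_zx, h.mul_mul_xyx,
      h.mul_mul_yzy, h.mul_mul_zxz, map_zero]

theorem neg_I_smul_lie_xy (h : IsSpinOneTriple x y z) : -(I • (x * y - y * x)) = z := by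
  simp [h.lie_xy, smul_smul]

theorem mul_mul_xzx (h : IsSpinOneTriple x y z) : x * z * x = 0 := by
  have : I • (x * z * x) = 0 := by
    calc I • (x * z * x) = x * (I • z) * x := by simp only [mul_smul_comm, smul_mul_assoc]
      _ = x * (x * y * x) - x * y * x * x := by rw [← h.lie_xy]; noncomm_ring
      _ = 0 := by rw [h.mul_mul_xyx]; simp
  simpa using this

theorem sq_mul_y (h : IsSpinOneTriple x y z) : x ^ 2 * y = I • (x * z) := by
  calc x ^ 2 * y = x * (x * y - y * x) + x * y * x := by noncomm_ring
    _ = I • (x * z) := by rw [h.lie_xy, h.mul_mul_xyx, mul_smul_comm, add_zero]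

theorem sq_mul_z (h : IsSpinOneTriple x y z) : x ^ 2 * z = -(I • (x * y)) := by
  calc x ^ 2 * z = x * z * x - x * (z * x - x * z) := by noncomm_ring
    _ = -(I • (x * y)) := by rw [h.lie_zx, h.mul_mul_xzx, mul_smul_comm, zero_sub]

theorem y_mul_sq (h : IsSpinOneTriple x y z) : y * x ^ 2 = -(I • (z * x)) := by
  calc y * x ^ 2 = x * y * x - (x * y - y * x) * x := by noncomm_ring
    _ = -(I • (z * x)) := by rw [h.lie_xy, h.mul_mul_xyx, smul_mul_assoc, zero_sub]

theorem z_mul_sq (h : IsSpinOneTriple x y z) : z * x ^ 2 = I • (y * x) := by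
  calc z * x ^ 2 = (z * x - x * z) * x + x * z * x := by noncomm_ring
    _ = I • (y * x) := by rw [h.lie_zx, h.mul_mul_xzx, smul_mul_assoc, add_zero]

theorem sq_mul_y_add (h : IsSpinOneTriple x y z) : x ^ 2 * y + y * x ^ 2 = y := by
  calc x ^ 2 * y + y * x ^ 2 = -(I • (z * x - x * z)) := by rw [h.sq_mul_y, h.y_mul_sq]; module
    _ = y := h.rotate.rotate.neg_I_smul_lie_xy

theorem sq_mul_z_add (h : IsSpinOneTriple x y z) : x ^ 2 * z + z * x ^ 2 = z := by
  calc x ^ 2 * z + z * x ^ 2 = -(I • (x * y - y * x)) := by rw [h.sq_mul_z, h.z_mul_sq]; module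
    _ = z := h.neg_I_smul_lie_xy

theorem pow_three_eq (h : IsSpinOneTriple x y z) : x ^ 3 = x := by
  have hx : -(I • (y * z - z * y)) = x := h.rotate.neg_I_smul_lie_xy
  calc x ^ 3 = x ^ 2 * -(I • (y * z - z * y)) := by rw [hx, ← pow_succ]
    _ = -(I • (x ^ 2 * y * z - x ^ 2 * z * y)) := by
        simp only [mul_neg, mul_smul_comm, mul_sub, mul_assoc]
    _ = x * z ^ 2 + x * y ^ 2 := by
        simp only [h.sq_mul_y, h.sq_mul_z, smul_mul_assoc, neg_mul, sub_neg_eq_add, smul_add,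
          smul_smul, I_sq, mul_assoc, ← sq]
        module
    _ = -(I • (y * z - z * y)) := by
        rw [h.rotate.rotate.y_mul_sq, h.rotate.z_mul_sq]; module
    _ = x := hx

theorem commute_sq_x_sq_z (h : IsSpinOneTriple x y z) : Commute (x ^ 2) (z ^ 2) := by
  have hzx : x ^ 2 * z = z - z * x ^ 2 := eq_sub_of_add_eq h.sq_mul_z_add
  calc x ^ 2 * z ^ 2 = x ^ 2 * z * z := by rw [sq z, mul_assoc]
    _ = (z - z * x ^ 2) * z := by rw [hzx]
    _ = z ^ 2 - z * (x ^ 2 * z) := by noncomm_ring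
    _ = z ^ 2 * x ^ 2 := by rw [hzx]; noncomm_ring

theorem y_mul_halfTurn_z (h : IsSpinOneTriple x y z) :
    y * halfTurn z = -(I • (x * z + z * x)) := by
  have hz := h.rotate.rotate
  calc y * halfTurn z = y - 2 * (y * z ^ 2) := by rw [halfTurn]; noncomm_ring
    _ = z ^ 2 * y + y * z ^ 2 - 2 * (y * z ^ 2) := by rw [hz.sq_mul_z_add]
    _ = z ^ 2 * y - y * z ^ 2 := by noncomm_ring
    _ = -(I • (x * z + z * x)) := by rw [hz.sq_mul_z, hz.z_mul_sq]; module

theorem halfTurn_x_mul_y (h : IsSpinOneTriple x y z) :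
    halfTurn x * y = -(I • (x * z + z * x)) := by
  calc halfTurn x * y = y - 2 * (x ^ 2 * y) := by rw [halfTurn]; noncomm_ring
    _ = x ^ 2 * y + y * x ^ 2 - 2 * (x ^ 2 * y) := by rw [h.sq_mul_y_add]
    _ = y * x ^ 2 - x ^ 2 * y := by noncomm_ring
    _ = -(I • (x * z + z * x)) := by rw [h.y_mul_sq, h.sq_mul_y]; module

theorem semiconjBy_quarterTurn_z (h : IsSpinOneTriple x y z) :
    SemiconjBy (quarterTurn y) z x := by
  rw [SemiconjBy, quarterTurn, ← sub_eq_zero]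
  calc (1 - I • y - y ^ 2) * z - x * (1 - I • y - y ^ 2)
      = z - x - I • (y * z) + I • (x * y) - y ^ 2 * z + x * y ^ 2 := by
        simp only [sub_mul, mul_sub, one_mul, mul_one, smul_mul_assoc, mul_smul_comm]; abel
    _ = z - x - -(I • (x * y - y * x)) + -(I • (y * z - z * y)) := by
        rw [h.rotate.sq_mul_y, h.rotate.z_mul_sq]; module
    _ = 0 := by rw [h.neg_I_smul_lie_xy, h.rotate.neg_I_smul_lie_xy]; abel

theorem semiconjBy_quarterTurn_x (h : IsSpinOneTriple x y z) :
    SemiconjBy (quarterTurn y) (-x) z := by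
  rw [SemiconjBy, quarterTurn, ← sub_eq_zero]
  calc (1 - I • y - y ^ 2) * -x - z * (1 - I • y - y ^ 2)
      = -x - z + I • (y * x) + I • (z * y) + y ^ 2 * x + z * y ^ 2 := by
        simp only [sub_mul, mul_sub, one_mul, mul_one, smul_mul_assoc, mul_smul_comm, mul_neg]
        module
    _ = -x - z + -(I • (x * y - y * x)) + -(I • (y * z - z * y)) := by
        rw [h.rotate.sq_mul_z, h.rotate.y_mul_sq]; module
    _ = 0 := by rw [h.neg_I_smul_lie_xy, h.rotate.neg_I_smul_lie_xy]; abel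

end IsSpinOneTriple

theorem spin_isSpinOneTriple : IsSpinOneTriple Sx Sy Sz := by
  have hs : ((Real.sqrt 2 : ℝ) : ℂ)⁻¹ * ((Real.sqrt 2 : ℝ) : ℂ)⁻¹ = 1 / 2 := by
    rw [← mul_inv, ← ofReal_mul, Real.mul_self_sqrt zero_le_two]; norm_num
  constructor
  all_goals
    simp only [Sx, Sy, Sz, smul_mul_assoc, mul_smul_comm, smul_smul, hs]
    ext i j
    fin_cases i <;> fin_cases j <;> simp <;> grind [I_mul_I]

section PiKronecker

variable {ι n R : Type*} [Fintype ι] [DecidableEq ι] [Fintype n] [DecidableEq n] [CommSemiring R]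

/-- The Kronecker product of a finite family of square matrices, as a matrix on tuples of
indices. -/
def piKronecker : (ι → Matrix n n R) →* Matrix (ι → n) (ι → n) R where
  toFun A := Matrix.of fun f g ↦ ∏ k, A k (f k) (g k)
  map_one' := by
    ext f g
    simp only [Matrix.of_apply, Pi.one_apply, Matrix.one_apply, Finset.prod_ite_zero,
      Finset.prod_const_one, funext_iff, Finset.mem_univ, true_imp_iff]
  map_mul' A B := by
    ext f g
    simp only [Matrix.mul_apply, Matrix.of_apply, Pi.mul_apply, ← Finset.prod_mul_distrib,
      Finset.prod_univ_sum, Fintype.piFinset_univ]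

end PiKronecker

theorem list_prod_map_mulSingle {M : Type*} [Monoid M] {L : ℕ} (a : Fin L → M) :
    ((List.finRange L).map fun v ↦ Pi.mulSingle v (a v)).prod = a := by
  ext w
  rw [Pi.list_prod_apply, List.map_map, List.prod_map_eq_pow_single w]
  · simp
  · intro v hvw _
    simp [Pi.mulSingle_eq_of_ne' hvw]

section Site

variable {L : ℕ} {A B : Matrix (Fin 3) (Fin 3) ℂ} {i j k : Fin L}

theorem site_eq_piKronecker_mulSingle (A : Matrix (Fin 3) (Fin 3) ℂ) (j : Fin L) :
    site A j = piKronecker (Pi.mulSingle j A) := by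
  ext f g
  simp only [site, piKronecker, MonoidHom.coe_mk, OneHom.coe_mk, Matrix.of_apply]
  refine Finset.prod_congr rfl fun k _ ↦ ?_
  rcases eq_or_ne k j with rfl | hkj
  · simp
  · simp [hkj, Matrix.one_apply]

theorem site_apply_eq_mul_prod_erase (A : Matrix (Fin 3) (Fin 3) ℂ) (j : Fin L)
    (f g : Fin L → Fin 3) :
    site A j f g = A (f j) (g j) * ∏ k ∈ Finset.univ.erase j, if f k = g k then 1 else 0 := by
  rw [site, Matrix.of_apply, ← Finset.mul_prod_erase _ _ (Finset.mem_univ j), if_pos rfl]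
  congr 1
  exact Finset.prod_congr rfl fun k hk ↦ if_neg (Finset.ne_of_mem_erase hk)

/-- The embedding `A ↦ A_j` of the one-site operators into those of the chain. -/
def siteAlgHom (j : Fin L) : Matrix (Fin 3) (Fin 3) ℂ →ₐ[ℂ] Op L :=
  AlgHom.ofLinearMap
    { toFun A := site A j
      map_add' A B := by ext; simp only [site_apply_eq_mul_prod_erase, Matrix.add_apply, add_mul]
      map_smul' c A := by ext; simp [site_apply_eq_mul_prod_erase, mul_assoc] }
    (by simp [site_eq_piKronecker_mulSingle])
    (by simp [site_eq_piKronecker_mulSingle, Pi.mulSingle_mul])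

theorem siteAlgHom_apply (A : Matrix (Fin 3) (Fin 3) ℂ) (j : Fin L) : siteAlgHom j A = site A j :=
  rfl

theorem site_commute_of_ne (A B : Matrix (Fin 3) (Fin 3) ℂ) (hij : i ≠ j) :
    Commute (site A i) (site B j) := by
  simpa only [site_eq_piKronecker_mulSingle] using (Pi.mulSingle_commute hij A B).map piKronecker

theorem site_commute (hAB : Commute A B) (i j : Fin L) : Commute (site A i) (site B j) := by
  rcases eq_or_ne i j with rfl | hij
  · exact hAB.map (siteAlgHom i)
  · exact site_commute_of_ne A B hij

theorem exp_smul_site (c : ℂ) (A : Matrix (Fin 3) (Fin 3) ℂ) (j : Fin L) :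
    NormedSpace.exp (c • site A j) = site (NormedSpace.exp (c • A)) j := by
  have hcont : Continuous (siteAlgHom j) :=
    LinearMap.continuous_of_finiteDimensional (siteAlgHom j).toLinearMap
  rw [← siteAlgHom_apply, ← siteAlgHom_apply, ← map_smul]
  exact open scoped Matrix.Norms.Operator in (NormedSpace.map_exp (siteAlgHom j) hcont (c • A)).symm

theorem globalProd_eq_piKronecker (A : Matrix (Fin 3) (Fin 3) ℂ) (c : ℂ) :
    globalProd L A c = piKronecker fun _ ↦ NormedSpace.exp (c • A) := by
  rw [← list_prod_map_mulSingle fun _ : Fin L ↦ NormedSpace.exp (c • A), map_list_prod,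
    List.map_map]
  simp only [globalProd, exp_smul_site, Function.comp_def, ← site_eq_piKronecker_mulSingle]

theorem semiconjBy_piKronecker_site {g : Matrix (Fin 3) (Fin 3) ℂ} (h : SemiconjBy g A B)
    (k : Fin L) : SemiconjBy (piKronecker fun _ ↦ g) (site A k) (site B k) := by
  simp only [site_eq_piKronecker_mulSingle]
  refine SemiconjBy.map (Pi.semiconjBy_iff.2 fun i ↦ ?_) piKronecker
  rcases eq_or_ne i k with rfl | hik
  · simpa using h
  · simp [hik]

end Site

section Bond

variable {A B : Type*} [Ring A] [Algebra ℂ A] [Ring B] [Algebra ℂ B] {f g : A →ₐ[ℂ] B} {x y z : A}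

/-- The bond `x ⊗ x + z ⊗ z + {x, z} ⊗ {x, z}`, where `f` and `g` embed the one-site algebra at the
two ends and `{x, z}` is the anticommutator. Up to sign it is the Kennedy–Tasaki dual of the
Heisenberg bond. -/
def xzBond (f g : A →ₐ[ℂ] B) (x z : A) : B :=
  f x * g x + f z * g z + f (x * z + z * x) * g (x * z + z * x)

theorem xzBond_neg_left (f g : A →ₐ[ℂ] B) (x z : A) : xzBond f g (-x) z = xzBond f g x z := by
  have hanti : -x * z + z * -x = -(x * z + z * x) := by noncomm_ring
  simp only [xzBond, hanti, map_neg, neg_mul_neg]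

theorem xzBond_comm (f g : A →ₐ[ℂ] B) (x z : A) : xzBond f g z x = xzBond f g x z := by
  simp only [xzBond, add_comm (z * x), add_comm (f z * g z)]

theorem semiconjBy_xzBond {G : B} {x' z' : A}
    (hfx : SemiconjBy G (f x) (f x')) (hgx : SemiconjBy G (g x) (g x'))
    (hfz : SemiconjBy G (f z) (f z')) (hgz : SemiconjBy G (g z) (g z')) :
    SemiconjBy G (xzBond f g x z) (xzBond f g x' z') := by
  simp only [xzBond, map_add, map_mul]
  exact ((hfx.mul_right hgx).add_right (hfz.mul_right hgz)).add_right
    (((hfx.mul_right hfz).add_right (hfz.mul_right hfx)).mul_right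
      ((hgx.mul_right hgz).add_right (hgz.mul_right hgx)))

namespace IsSpinOneTriple

theorem commute_bond_add (h : IsSpinOneTriple x y z) (hfg : ∀ a b, Commute (f a) (g b)) :
    Commute (f x * g x + f y * g y + f z * g z) (f x + g x) := by
  have hf (a : A) : f a * g a * f x - f x * (f a * g a) = f (a * x - x * a) * g a := by
    rw [mul_assoc, ← (hfg x a).eq, map_sub, map_mul, map_mul]; noncomm_ring
  have hg (a : A) : f a * g a * g x - g x * (f a * g a) = f a * g (a * x - x * a) := by
    rw [← mul_assoc (g x), ← (hfg a x).eq, map_sub, map_mul, map_mul]; noncomm_ring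
  have hyx : y * x - x * y = -(I • z) := by rw [← h.lie_xy, neg_sub]
  rw [commute_iff_lie_eq, Ring.lie_def]
  calc (f x * g x + f y * g y + f z * g z) * (f x + g x)
        - (f x + g x) * (f x * g x + f y * g y + f z * g z)
      = f (x * x - x * x) * g x + f x * g (x * x - x * x)
        + (f (y * x - x * y) * g y + f y * g (y * x - x * y))
        + (f (z * x - x * z) * g z + f z * g (z * x - x * z)) := by
        simp only [← hf, ← hg]; noncomm_ring
    _ = 0 := by
        simp only [hyx, h.lie_zx, sub_self, map_zero, map_neg, map_smul, smul_mul_assoc,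
          mul_smul_comm, neg_mul, mul_neg, zero_mul, mul_zero]
        abel

theorem halfTurn_conj_xx (h : IsSpinOneTriple x y z) (hfg : ∀ a b, Commute (f a) (g b)) :
    halfTurn (f z * g x) * (f x * g x) * halfTurn (f z * g x) = -(f x * g x) := by
  have hfzxy := (h.map f).rotate.rotate
  have hgx : g x ^ 3 = g x := (h.map g).pow_three_eq
  have hcomm : Commute (halfTurn (f z * g x)) (g x) :=
    halfTurn_commute ((hfg z x).mul_left (.refl (g x)))
  calc halfTurn (f z * g x) * (f x * g x) * halfTurn (f z * g x)
      = halfTurn (f z * g x) * f x * halfTurn (f z * g x) * g x := by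
        simp only [mul_assoc, hcomm.eq]
    _ = f x * (halfTurn (g x) * g x) := by
        rw [halfTurn_mul_conj_left (hfg z x) hfzxy.pow_three_eq hgx (hfg x x).symm
          hfzxy.sq_mul_y_add, mul_assoc]
    _ = -(f x * g x) := by rw [halfTurn_mul_eq_neg hgx, mul_neg]

theorem halfTurn_conj_zz (h : IsSpinOneTriple x y z) (hfg : ∀ a b, Commute (f a) (g b)) :
    halfTurn (f z * g x) * (f z * g z) * halfTurn (f z * g x) = -(f z * g z) := by
  have hfz : f z ^ 3 = f z := (h.map f).rotate.rotate.pow_three_eq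
  have hgxyz := h.map g
  have hcomm : Commute (halfTurn (f z * g x)) (f z) :=
    halfTurn_commute ((Commute.refl (f z)).mul_left (hfg z x).symm)
  calc halfTurn (f z * g x) * (f z * g z) * halfTurn (f z * g x)
      = f z * (halfTurn (f z * g x) * g z * halfTurn (f z * g x)) := by
        simp only [← mul_assoc, hcomm.eq]
    _ = f z * halfTurn (f z) * g z := by
        rw [halfTurn_mul_conj_right (hfg z x) hfz hgxyz.pow_three_eq (hfg z z)
          hgxyz.sq_mul_z_add, mul_assoc]
    _ = -(f z * g z) := by rw [mul_halfTurn_eq_neg hfz, neg_mul]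

theorem halfTurn_conj_yy (h : IsSpinOneTriple x y z) (hfg : ∀ a b, Commute (f a) (g b)) :
    halfTurn (f z * g x) * (f y * g y) * halfTurn (f z * g x) =
      -(f (x * z + z * x) * g (x * z + z * x)) := by
  have hfzxy := (h.map f).rotate.rotate
  have hgxyz := h.map g
  have hfz : f z ^ 3 = f z := hfzxy.pow_three_eq
  have hgx : g x ^ 3 = g x := hgxyz.pow_three_eq
  have hsq : halfTurn (f z * g x) * halfTurn (f z * g x) = 1 :=
    halfTurn_mul_self (by rw [(hfg z x).mul_pow, hfz, hgx])
  have hcomm : Commute (halfTurn (g x)) (halfTurn (f z)) :=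
    halfTurn_commute (halfTurn_commute (hfg z x)).symm
  calc halfTurn (f z * g x) * (f y * g y) * halfTurn (f z * g x)
      = halfTurn (f z * g x) * f y * halfTurn (f z * g x) *
          (halfTurn (f z * g x) * g y * halfTurn (f z * g x)) := by
        simp only [mul_assoc, ← mul_assoc (halfTurn (f z * g x)) (halfTurn (f z * g x)), hsq,
          one_mul]
    _ = f y * halfTurn (g x) * (halfTurn (f z) * g y) := by
        rw [halfTurn_mul_conj_left (hfg z x) hfz hgx (hfg y x).symm hfzxy.sq_mul_z_add,
          halfTurn_mul_conj_right (hfg z x) hfz hgx (hfg z y) hgxyz.sq_mul_y_add]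
    _ = f y * halfTurn (f z) * (halfTurn (g x) * g y) := by
        rw [mul_assoc, ← mul_assoc (halfTurn (g x)), hcomm.eq]; simp only [mul_assoc]
    _ = -(f (x * z + z * x) * g (x * z + z * x)) := by
        rw [(h.map f).y_mul_halfTurn_z, hgxyz.halfTurn_x_mul_y]
        simp only [neg_mul_neg, smul_mul_smul_comm, I_mul_I, neg_one_smul, map_add, map_mul]

theorem halfTurn_conj_bond (h : IsSpinOneTriple x y z) (hfg : ∀ a b, Commute (f a) (g b)) :
    halfTurn (f z * g x) * (f x * g x + f y * g y + f z * g z) * halfTurn (f z * g x) =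
      -xzBond f g x z := by
  rw [mul_add, mul_add, add_mul, add_mul, h.halfTurn_conj_xx hfg, h.halfTurn_conj_yy hfg,
    h.halfTurn_conj_zz hfg, xzBond]
  abel

end IsSpinOneTriple

end Bond

section CommutingFamily

open scoped IsMulCommutative

universe u

variable {M : Type u} [Monoid M]

theorem exists_commMonoid_lift {ι : Type*} (g : ι → M) (hg : ∀ i i', Commute (g i) (g i')) :
    ∃ (N : Type u) (_ : CommMonoid N) (φ : N →* M) (g' : ι → N), ∀ i, φ (g' i) = g i := by
  have := Submonoid.isMulCommutative_closure M (s := Set.range g)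
    (by rintro _ ⟨i, rfl⟩ _ ⟨i', rfl⟩; exact hg i i')
  exact ⟨Submonoid.closure (Set.range g), inferInstance, Submonoid.subtype _,
    fun i ↦ ⟨g i, Submonoid.subset_closure ⟨i, rfl⟩⟩, fun _ ↦ rfl⟩

theorem map_prod_prod_eq_list_prod {N : Type*} [CommMonoid N] (φ : N →* M) {L : ℕ}
    (g : Fin L → Fin L → N) :
    φ (∏ u, ∏ v, g u v) =
      ((List.finRange L).map fun u ↦ ((List.finRange L).map fun v ↦ φ (g u v)).prod).prod := by
  simp only [Fin.prod_univ_def, map_list_prod, List.map_map, Function.comp_def]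

theorem conj_eq_conj_of_commute {P K h : M} (hP : P * P = 1) (hK : K * K = 1)
    (hcomm : Commute (K * P) h) : P * h * P = K * h * K := by
  calc P * h * P = K * (K * P * h) * P := by simp only [← mul_assoc, hK, one_mul]
    _ = K * h * K * (P * P) := by rw [hcomm.eq]; simp only [mul_assoc]
    _ = K * h * K := by rw [hP, mul_one]

theorem exists_mem_prod_prod_eq {N ι : Type*} [CommMonoid N] [Fintype ι]
    (T : Submonoid N) (g : ι → ι → N) {j k : ι} (hjk : j ≠ k)
    (hcol : ∀ w, w ≠ j → w ≠ k → g w j * g w k ∈ T)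
    (hrow : ∀ w, w ≠ j → w ≠ k → g j w * g k w ∈ T)
    (hrest : ∀ u v, u ≠ j → u ≠ k → v ≠ j → v ≠ k → g u v ∈ T) :
    ∃ r ∈ T, ∏ u, ∏ v, g u v = g j j * g j k * (g k j * g k k) * r := by
  classical
  have hsplit (a : ι → N) : ∏ i, a i = a j * a k * ∏ i ∈ {j, k}ᶜ, a i := by
    rw [← Finset.prod_mul_prod_compl {j, k}, Finset.prod_pair hjk]
  have hne {w : ι} (hw : w ∈ ({j, k} : Finset ι)ᶜ) : w ≠ j ∧ w ≠ k := by simpa using hw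
  refine ⟨(∏ v ∈ {j, k}ᶜ, (g j v * g k v)) *
    ∏ u ∈ {j, k}ᶜ, (g u j * g u k * ∏ v ∈ {j, k}ᶜ, g u v),
    mul_mem (prod_mem fun v hv ↦ ?_)
      (prod_mem fun u hu ↦ mul_mem ?_ (prod_mem fun v hv ↦ ?_)), ?_⟩
  · exact hrow v (hne hv).1 (hne hv).2
  · exact hcol u (hne hu).1 (hne hu).2
  · exact hrest u v (hne hu).1 (hne hu).2 (hne hv).1 (hne hv).2
  · simp only [hsplit, Finset.prod_mul_distrib]
    ac_rfl

end CommutingFamily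

section KennedyTasaki

variable {L : ℕ} {u v w j k : Fin L}

theorem site_isSpinOneTriple (j : Fin L) : IsSpinOneTriple (site Sx j) (site Sy j) (site Sz j) :=
  spin_isSpinOneTriple.map (siteAlgHom j)

theorem site_Sz_mul_site_Sx_pow_three (huv : u ≠ v) :
    (site Sz u * site Sx v) ^ 3 = site Sz u * site Sx v := by
  rw [(site_commute_of_ne Sz Sx huv).mul_pow,
    (site_isSpinOneTriple u).rotate.rotate.pow_three_eq, (site_isSpinOneTriple v).pow_three_eq]

theorem ktFactor_eq_halfTurn (huv : u ≠ v) : ktFactor u v = halfTurn (site Sz u * site Sx v) :=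
  exp_pi_mul_I_smul_eq_halfTurn (site_Sz_mul_site_Sx_pow_three huv)

/-- The factor contributed by the pair of sites `(u, v)` to `U_KT`: trivial unless `u < v`, so that
`U_KT` is the product over all pairs. -/
def ktGate (u v : Fin L) : Op L := if u < v then ktFactor u v else 1

theorem ktGate_of_lt (huv : u < v) : ktGate u v = ktFactor u v := if_pos huv

theorem ktGate_of_not_lt (huv : ¬u < v) : ktGate u v = 1 := if_neg huv

theorem ktGate_mul_self (u v : Fin L) : ktGate u v * ktGate u v = 1 := by
  by_cases huv : u < v
  · rw [ktGate_of_lt huv, ktFactor_eq_halfTurn huv.ne,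
      halfTurn_mul_self (site_Sz_mul_site_Sx_pow_three huv.ne)]
  · rw [ktGate_of_not_lt huv, one_mul]

theorem site_Sx_sq_commute_site_Sz_sq (u v : Fin L) : Commute (site Sx u ^ 2) (site Sz v ^ 2) := by
  simp only [← siteAlgHom_apply, ← map_pow]
  exact site_commute spin_isSpinOneTriple.commute_sq_x_sq_z u v

theorem ktFactor_commute {u' v' : Fin L} (huv : u ≠ v) (huv' : u' ≠ v') :
    Commute (ktFactor u v) (ktFactor u' v') := by
  have hsq : Commute ((site Sz u * site Sx v) ^ 2) ((site Sz u' * site Sx v') ^ 2) := by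
    rw [(site_commute_of_ne Sz Sx huv).mul_pow, (site_commute_of_ne Sz Sx huv').mul_pow]
    refine .mul_left (.mul_right ?_ ?_) (.mul_right ?_ ?_)
    · exact (site_commute (Commute.refl Sz) u u').pow_pow 2 2
    · exact (site_Sx_sq_commute_site_Sz_sq v' u).symm
    · exact site_Sx_sq_commute_site_Sz_sq v u'
    · exact (site_commute (Commute.refl Sx) v v').pow_pow 2 2
  rw [ktFactor_eq_halfTurn huv, ktFactor_eq_halfTurn huv']
  exact halfTurn_commute_of_sq (halfTurn_commute_of_sq hsq.symm).symm

theorem ktGate_commute (u v u' v' : Fin L) : Commute (ktGate u v) (ktGate u' v') := by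
  unfold ktGate
  split_ifs with huv huv'
  · exact ktFactor_commute huv.ne huv'.ne
  all_goals simp

theorem exists_commMonoid_lift_UKT (L : ℕ) :
    ∃ (N : Type) (_ : CommMonoid N) (φ : N →* Op L) (g : Fin L → Fin L → N),
      (∀ u v, φ (g u v) = ktGate u v) ∧ φ (∏ u, ∏ v, g u v) = UKT L := by
  obtain ⟨N, hN, φ, g, hg⟩ := exists_commMonoid_lift
    (fun p : Fin L × Fin L ↦ ktGate p.1 p.2) fun p q ↦ ktGate_commute p.1 p.2 q.1 q.2
  refine ⟨N, hN, φ, fun u v ↦ g (u, v), fun u v ↦ hg (u, v), ?_⟩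
  simp only [map_prod_prod_eq_list_prod, hg, UKT, ktGate]

theorem UKT_mul_self (L : ℕ) : UKT L * UKT L = 1 := by
  obtain ⟨N, _, φ, g, hg, hUKT⟩ := exists_commMonoid_lift_UKT L
  have hgg (u v : Fin L) : g u v * g u v ∈ MonoidHom.mker φ := by
    rw [MonoidHom.mem_mker, map_mul, hg, ktGate_mul_self]
  rw [← hUKT, ← map_mul, ← MonoidHom.mem_mker]
  simp only [← Finset.prod_mul_distrib]
  exact prod_mem fun u _ ↦ prod_mem fun v _ ↦ hgg u v

theorem heis_commute_site (A : Matrix (Fin 3) (Fin 3) ℂ) (hwj : w ≠ j) (hwk : w ≠ k) :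
    Commute (heis j k) (site A w) := by
  have hpair (B : Matrix (Fin 3) (Fin 3) ℂ) : Commute (site B j * site B k) (site A w) :=
    (site_commute_of_ne B A hwj.symm).mul_left (site_commute_of_ne B A hwk.symm)
  exact ((hpair Sx).add_left (hpair Sy)).add_left (hpair Sz)

theorem heis_commute_site_Sx_add (hjk : j ≠ k) :
    Commute (heis j k) (site Sx j + site Sx k) :=
  spin_isSpinOneTriple.commute_bond_add (f := siteAlgHom j) (g := siteAlgHom k)
    fun A B ↦ site_commute_of_ne A B hjk

theorem heis_commute_site_Sz_add (hjk : j ≠ k) :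
    Commute (heis j k) (site Sz j + site Sz k) := by
  have hrotated := spin_isSpinOneTriple.rotate.rotate.commute_bond_add (f := siteAlgHom j)
    (g := siteAlgHom k) fun A B ↦ site_commute_of_ne A B hjk
  rwa [add_assoc, add_comm] at hrotated

theorem ktFactor_mul_ktFactor_left_commute_heis (hjk : j ≠ k) (hwj : w ≠ j) (hwk : w ≠ k) :
    Commute (ktFactor w j * ktFactor w k) (heis j k) := by
  have hcomm : Commute (site Sz w * site Sx j) (site Sz w * site Sx k) :=
    .mul_left (.mul_right (.refl _) (site_commute_of_ne Sz Sx hwk))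
      (.mul_right (site_commute_of_ne Sx Sz hwj.symm) (site_commute_of_ne Sx Sx hjk))
  have hexp : ktFactor w j * ktFactor w k =
      NormedSpace.exp ((Real.pi * I : ℂ) • (site Sz w * (site Sx j + site Sx k))) := by
    rw [ktFactor, ktFactor, mul_add, smul_add,
      Matrix.exp_add_of_commute _ _ ((hcomm.smul_left _).smul_right _)]
  rw [hexp]
  exact (((heis_commute_site Sz hwj hwk).mul_right
    (heis_commute_site_Sx_add hjk)).smul_right _).symm.exp_left

theorem ktFactor_mul_ktFactor_right_commute_heis (hjk : j ≠ k) (hwj : w ≠ j) (hwk : w ≠ k) :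
    Commute (ktFactor j w * ktFactor k w) (heis j k) := by
  have hcomm : Commute (site Sz j * site Sx w) (site Sz k * site Sx w) :=
    .mul_left (.mul_right (site_commute_of_ne Sz Sz hjk) (site_commute_of_ne Sz Sx hwj.symm))
      (.mul_right (site_commute_of_ne Sx Sz hwk) (.refl _))
  have hexp : ktFactor j w * ktFactor k w =
      NormedSpace.exp ((Real.pi * I : ℂ) • ((site Sz j + site Sz k) * site Sx w)) := by
    rw [ktFactor, ktFactor, add_mul, smul_add,
      Matrix.exp_add_of_commute _ _ ((hcomm.smul_left _).smul_right _)]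
  rw [hexp]
  exact (((heis_commute_site_Sz_add hjk).mul_right
    (heis_commute_site Sx hwj hwk)).smul_right _).symm.exp_left

theorem ktGate_commute_heis (huj : u ≠ j) (huk : u ≠ k) (hvj : v ≠ j) (hvk : v ≠ k) :
    Commute (ktGate u v) (heis j k) := by
  unfold ktGate
  split_ifs
  · exact (((heis_commute_site Sz huj huk).mul_right
      (heis_commute_site Sx hvj hvk)).smul_right _).symm.exp_left
  · exact .one_left _

theorem ktGate_mul_ktGate_left_commute_heis (hjk : j ⋖ k) (hwj : w ≠ j) (hwk : w ≠ k) :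
    Commute (ktGate w j * ktGate w k) (heis j k) := by
  by_cases hlt : w < j
  · rw [ktGate_of_lt hlt, ktGate_of_lt (hlt.trans hjk.lt)]
    exact ktFactor_mul_ktFactor_left_commute_heis hjk.ne hwj hwk
  · have hlt' : ¬w < k := fun h ↦ hlt ((hjk.le_of_lt h).lt_of_ne hwj)
    simp only [ktGate_of_not_lt hlt, ktGate_of_not_lt hlt', mul_one, Commute.one_left]

theorem ktGate_mul_ktGate_right_commute_heis (hjk : j ⋖ k) (hwj : w ≠ j) (hwk : w ≠ k) :
    Commute (ktGate j w * ktGate k w) (heis j k) := by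
  by_cases hlt : k < w
  · rw [ktGate_of_lt hlt, ktGate_of_lt (hjk.lt.trans hlt)]
    exact ktFactor_mul_ktFactor_right_commute_heis hjk.ne hwj hwk
  · have hlt' : ¬j < w := fun h ↦ hlt ((hjk.ge_of_gt h).lt_of_ne' hwk)
    simp only [ktGate_of_not_lt hlt, ktGate_of_not_lt hlt', mul_one, Commute.one_left]

theorem ktGate_mul_UKT_commute_heis (hjk : j ⋖ k) :
    Commute (ktGate j k * UKT L) (heis j k) := by
  obtain ⟨N, _, φ, g, hg, hUKT⟩ := exists_commMonoid_lift_UKT L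
  let T : Submonoid N := (Submonoid.centralizer {heis j k}).comap φ
  have mem_T {n : N} : n ∈ T ↔ Commute (φ n) (heis j k) := by
    simp [T, Submonoid.mem_centralizer_iff, commute_iff_eq, eq_comm]
  obtain ⟨r, hr, hprod⟩ := exists_mem_prod_prod_eq T g hjk.ne
    (fun w hwj hwk ↦ mem_T.2 <| by
      simpa only [map_mul, hg] using ktGate_mul_ktGate_left_commute_heis hjk hwj hwk)
    (fun w hwj hwk ↦ mem_T.2 <| by
      simpa only [map_mul, hg] using ktGate_mul_ktGate_right_commute_heis hjk hwj hwk)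
    (fun u v huj huk hvj hvk ↦ mem_T.2 <| by
      simpa only [hg] using ktGate_commute_heis huj huk hvj hvk)
  have hUKT_eq : UKT L = ktGate j k * φ r := by
    simp only [← hUKT, hprod, map_mul, hg, ktGate_of_not_lt (lt_irrefl _),
      ktGate_of_not_lt hjk.lt.not_gt, one_mul, mul_one]
  rw [hUKT_eq, ← mul_assoc, ktGate_mul_self, one_mul]
  exact mem_T.1 hr

theorem UKT_mul_heis_mul_UKT (hjk : j ⋖ k) :
    UKT L * heis j k * UKT L = -xzBond (siteAlgHom j) (siteAlgHom k) Sx Sz := by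
  rw [conj_eq_conj_of_commute (UKT_mul_self L) (ktGate_mul_self j k)
    (ktGate_mul_UKT_commute_heis hjk), ktGate_of_lt hjk.lt, ktFactor_eq_halfTurn hjk.ne]
  exact spin_isSpinOneTriple.halfTurn_conj_bond (f := siteAlgHom j)
    (g := siteAlgHom k) fun A B ↦ site_commute_of_ne A B hjk.ne

theorem semiconjBy_piKronecker_xzBond {g A A' B B' : Matrix (Fin 3) (Fin 3) ℂ}
    (hA : SemiconjBy g A A') (hB : SemiconjBy g B B') (j k : Fin L) :
    SemiconjBy (piKronecker fun _ ↦ g) (xzBond (siteAlgHom j) (siteAlgHom k) A B)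
      (xzBond (siteAlgHom j) (siteAlgHom k) A' B') :=
  semiconjBy_xzBond (semiconjBy_piKronecker_site hA j) (semiconjBy_piKronecker_site hA k)
    (semiconjBy_piKronecker_site hB j) (semiconjBy_piKronecker_site hB k)

theorem xzBond_commute_quarterTurn_Sy (j k : Fin L) :
    Commute (xzBond (siteAlgHom j) (siteAlgHom k) Sx Sz)
      (globalProd L Sy (-(((Real.pi / 2 : ℝ) : ℂ) * I))) := by
  have hsemiconj := semiconjBy_piKronecker_xzBond spin_isSpinOneTriple.semiconjBy_quarterTurn_x
    spin_isSpinOneTriple.semiconjBy_quarterTurn_z j k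
  rw [xzBond_neg_left, xzBond_comm _ _ Sx Sz] at hsemiconj
  rw [globalProd_eq_piKronecker,
    exp_neg_pi_div_two_mul_I_smul_eq_quarterTurn spin_isSpinOneTriple.rotate.pow_three_eq]
  exact hsemiconj.symm

theorem xzBond_commute_halfTurn_Sz (j k : Fin L) :
    Commute (xzBond (siteAlgHom j) (siteAlgHom k) Sx Sz)
      (globalProd L Sz (-((Real.pi : ℂ) * I))) := by
  have hzxy := spin_isSpinOneTriple.rotate.rotate
  have hsemiconj := semiconjBy_piKronecker_xzBond
    (semiconjBy_halfTurn_neg hzxy.sq_mul_y_add) (halfTurn_commute (Commute.refl Sz)) j k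
  rw [xzBond_neg_left] at hsemiconj
  rw [globalProd_eq_piKronecker, exp_neg_pi_mul_I_smul_eq_halfTurn hzxy.pow_three_eq]
  exact hsemiconj.symm

end KennedyTasaki

/-- The Kennedy–Tasaki dual of the Heisenberg bond commutes with the global
quarter-turn `Y_{π/2} = ∏_k exp(−i(π/2)Sʸ_k)` and with the global π-rotation
`Z_π = ∏_k exp(−iπSᶻ_k)`; that is, it respects the `ℤ₄^y ⋊ ℤ₂^z` symmetry. -/
theorem dual_bond_symmetry (L : ℕ) (hL : 2 ≤ L) (j : Fin L) (hj : (j : ℕ) + 1 < L) :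
    Commute (UKT L * heis j ⟨(j : ℕ) + 1, hj⟩ * UKT L)
        (globalProd L Sy (-(((Real.pi / 2 : ℝ) : ℂ) * I))) ∧
      Commute (UKT L * heis j ⟨(j : ℕ) + 1, hj⟩ * UKT L)
        (globalProd L Sz (-((Real.pi : ℂ) * I))) := by
  have hjk : j ⋖ ⟨(j : ℕ) + 1, hj⟩ := by
    rw [Fin.covBy_iff]
    exact Order.covBy_add_one _
  rw [UKT_mul_heis_mul_UKT hjk]
  exact ⟨(xzBond_commute_quarterTurn_Sy _ _).neg_left, (xzBond_commute_halfTurn_Sz _ _).neg_left⟩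

end
end
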